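/- Let α_n be an optimal set of n-means for P (n ≥ 2), with O_n := {σ ∈ {1,2}* : S_σ(2/3) ∈ α_n}. Then the nth quantization error satisfies V_n = Σ_{σ ∈ O_n} P(J_σ)·λ(J_σ)²·V = Σ_{σ ∈ O_n} 3^{|σ|−c(σ)} / 2^{4|σ|+2c(σ)} · V, where V = 16/153 and c(σ) is the number of 1's in σ. -/

import Mathlib

open MeasureTheory Set
open scoped ENNReal Classical

noncomputable section

/-- The similarity map `S₁(x) = x/4`. -/
def S1 (x : ℝ) : ℝ := x / 4

/-- The similarity map `S₂(x) = x/2 + 1/2`. -/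
def S2 (x : ℝ) : ℝ := x / 2 + 1 / 2

/-- `P` satisfies the self-similarity relation `P = (1/4)·P∘S₁⁻¹ + (3/4)·P∘S₂⁻¹`. -/
def SelfSimilar (P : Measure ℝ) : Prop :=
  P = (1/4 : ℝ≥0∞) • P.map S1 + (3/4 : ℝ≥0∞) • P.map S2

/-- For a word `σ` over `{1,2}` (encoded as `Fin 2`, `0 ↦ S₁`, `1 ↦ S₂`),
the composition `S_σ = S_{σ₁} ∘ ⋯ ∘ S_{σ_k}`. -/
def Sw : List (Fin 2) → ℝ → ℝ
  | [] => id
  | i :: σ => (if i = 0 then S1 else S2) ∘ Sw σ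

/-- `p_σ`, the product of the probabilities `p₁ = 1/4`, `p₂ = 3/4` along `σ`. -/
def pw : List (Fin 2) → ℝ
  | [] => 1
  | i :: σ => (if i = 0 then (1:ℝ)/4 else 3/4) * pw σ

/-- `s_σ`, the product of the contraction ratios `s₁ = 1/4`, `s₂ = 1/2` along `σ`. -/
def sw : List (Fin 2) → ℝ
  | [] => 1
  | i :: σ => (if i = 0 then (1:ℝ)/4 else 1/2) * sw σ

/-- `c(σ)`, the number of occurrences of the symbol `1` (encoded `0`) in `σ`. -/
def cnt (σ : List (Fin 2)) : ℕ := σ.count 0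

/-- The cylinder interval `J_σ = S_σ([0,1])`. -/
def J (σ : List (Fin 2)) : Set ℝ := Sw σ '' Set.Icc 0 1

/-- The distortion error `V(P;α) = ∫ min_{a ∈ α} (x-a)² dP`. -/
def distortion (P : Measure ℝ) (α : Finset ℝ) : ℝ :=
  ∫ x, sInf ((fun a => (x - a) ^ 2) '' (α : Set ℝ)) ∂P

/-- The `n`-th quantization error `V_n`. -/
def qError (P : Measure ℝ) (n : ℕ) : ℝ :=
  sInf {e | ∃ α : Finset ℝ, α.Nonempty ∧ α.card ≤ n ∧ e = distortion P α}

/-- `α` is an optimal set of `n`-means for `P`. -/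
def IsOptimal (P : Measure ℝ) (n : ℕ) (α : Finset ℝ) : Prop :=
  α.Nonempty ∧ α.card ≤ n ∧ distortion P α = qError P n

/-- `q_σ := P(J_σ) · λ(J_σ)²`. -/
def qnt (P : Measure ℝ) (σ : List (Fin 2)) : ℝ :=
  (P (J σ)).toReal * ((volume (J σ)).toReal) ^ 2

/-!
For `n ≥ 2`, an optimal set has two neighbouring points whose Voronoi boundary lies in the gap
`[1/4, 1/2]` between the cylinders `J₁` and `J₂`: otherwise a single point serves the whole gap and
parts of both cylinders, and this costs more than a suitable union of scaled copies of smaller sets.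
Hence the optimal set is `S₁(β) ∪ S₂(γ)`, self-similarity gives
`V(P; α) = V(P; β) / 64 + 3 V(P; γ) / 16`, and optimality passes to `β` and `γ`. By induction `α`
consists of points `S_σ(2/3)`, the induction starting at the mean `2/3` with distortion `V`. Such a
point determines `σ`, so the words found in this way are exactly those in `O`.
-/

/-- The variance of the self-similar measure. -/
local notation "V" => (16 / 153 : ℝ)

lemma continuous_S1 : Continuous S1 := continuous_id.div_const 4

lemma continuous_S2 : Continuous S2 := (continuous_id.div_const 2).add_const _

namespace SelfSimilar

section Support

variable {P : Measure ℝ}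

lemma measure_eq (hP : SelfSimilar P) {A : Set ℝ} (hA : MeasurableSet A) :
    P A = 1 / 4 * P (S1 ⁻¹' A) + 3 / 4 * P (S2 ⁻¹' A) := by
  conv_lhs => rw [hP]
  simp only [Measure.add_apply, Measure.smul_apply, smul_eq_mul,
    Measure.map_apply continuous_S1.measurable hA, Measure.map_apply continuous_S2.measurable hA]

lemma measure_le_of_preimage_subset (hP : SelfSimilar P) {A B : Set ℝ} (hA : MeasurableSet A)
    (h1 : S1 ⁻¹' A ⊆ B) (h2 : S2 ⁻¹' A ⊆ B) : P A ≤ P B := by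
  have hsum : (1 / 4 + 3 / 4 : ℝ≥0∞) = 1 := by
    rw [← ENNReal.add_div, show (1 + 3 : ℝ≥0∞) = 4 by norm_num]
    exact ENNReal.div_self (by norm_num) (by norm_num)
  calc P A = 1 / 4 * P (S1 ⁻¹' A) + 3 / 4 * P (S2 ⁻¹' A) := hP.measure_eq hA
    _ ≤ 1 / 4 * P B + 3 / 4 * P B := by gcongr
    _ = P B := by rw [← add_mul, hsum, one_mul]

lemma measure_compl_Icc_le (hP : SelfSimilar P) {r : ℝ} (hr : 0 ≤ r) :
    P (Icc (-r) (1 + r))ᶜ ≤ P (Icc (-(2 * r)) (1 + 2 * r))ᶜ := by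
  refine hP.measure_le_of_preimage_subset measurableSet_Icc.compl
    (fun x hx hx' => hx ?_) (fun x hx hx' => hx ?_)
  · constructor <;> simp only [S1] <;> linarith [hx'.1, hx'.2]
  · constructor <;> simp only [S2] <;> linarith [hx'.1, hx'.2]

lemma measure_compl_Icc_le_two_pow (hP : SelfSimilar P) {r : ℝ} (hr : 0 ≤ r) (k : ℕ) :
    P (Icc (-r) (1 + r))ᶜ ≤ P (Icc (-(2 ^ k * r)) (1 + 2 ^ k * r))ᶜ := by
  induction k with
  | zero => simp
  | succ k ih =>
    rw [pow_succ', mul_assoc]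
    exact ih.trans (hP.measure_compl_Icc_le (by positivity))

variable [IsFiniteMeasure P]

-- A tail is at most every later tail, and these become negligible by tightness.
lemma measure_compl_Icc_eq_zero (hP : SelfSimilar P) {r : ℝ} (hr : 0 < r) :
    P (Icc (-r) (1 + r))ᶜ = 0 := by
  refine nonpos_iff_eq_zero.mp (le_of_forall_pos_le_add fun ε hε => ?_)
  obtain ⟨K, hK, hKε⟩ := isTightMeasureSet_iff_exists_isCompact_measure_compl_le.mp
    (isTightMeasureSet_singleton (μ := P)) ε hε
  obtain ⟨R, hR⟩ := hK.isBounded.subset_closedBall 0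
  obtain ⟨k, hk⟩ := pow_unbounded_of_one_lt (R / r) one_lt_two
  have hRk : R < 2 ^ k * r := (div_lt_iff₀ hr).mp hk
  have hsub : K ⊆ Icc (-(2 ^ k * r)) (1 + 2 ^ k * r) := by
    refine hR.trans ?_
    rw [Real.closedBall_eq_Icc]
    exact Icc_subset_Icc (by linarith) (by linarith)
  calc P (Icc (-r) (1 + r))ᶜ ≤ P (Icc (-(2 ^ k * r)) (1 + 2 ^ k * r))ᶜ :=
        hP.measure_compl_Icc_le_two_pow hr.le k
    _ ≤ P Kᶜ := measure_mono (compl_subset_compl.mpr hsub)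
    _ ≤ 0 + ε := by simpa using hKε P rfl

lemma ae_mem_Icc (hP : SelfSimilar P) : ∀ᵐ x ∂P, x ∈ Icc (0 : ℝ) 1 := by
  have htail : ∀ k : ℕ, ∀ᵐ x ∂P, x ∈ Icc (-(1 / ((k : ℝ) + 1))) (1 + 1 / ((k : ℝ) + 1)) :=
    fun k => ae_iff.mpr (hP.measure_compl_Icc_eq_zero Nat.one_div_pos_of_nat)
  filter_upwards [ae_all_iff.mpr htail] with x hx
  constructor <;> refine le_of_forall_pos_lt_add fun ε hε => ?_ <;>
    obtain ⟨k, hk⟩ := exists_nat_one_div_lt hε <;> linarith [(hx k).1, (hx k).2]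

end Support

section Integrals

variable {P : Measure ℝ} [IsFiniteMeasure P]

lemma integrable_of_continuous (hP : SelfSimilar P) {f : ℝ → ℝ} (hf : Continuous f) :
    Integrable f P := by
  rw [← Measure.restrict_eq_self_of_ae_mem hP.ae_mem_Icc]
  exact hf.continuousOn.integrableOn_compact isCompact_Icc

lemma integral_mono (hP : SelfSimilar P) {f g : ℝ → ℝ} (hf : Continuous f) (hg : Continuous g)
    (hfg : ∀ x ∈ Icc (0 : ℝ) 1, f x ≤ g x) : ∫ x, f x ∂P ≤ ∫ x, g x ∂P :=
  integral_mono_ae (hP.integrable_of_continuous hf) (hP.integrable_of_continuous hg)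
    (hP.ae_mem_Icc.mono hfg)

lemma integral_congr (hP : SelfSimilar P) {f g : ℝ → ℝ} (hfg : EqOn f g (Icc 0 1)) :
    ∫ x, f x ∂P = ∫ x, g x ∂P :=
  integral_congr_ae (hP.ae_mem_Icc.mono hfg)

lemma integral_eq (hP : SelfSimilar P) {f : ℝ → ℝ} (hf : Continuous f) :
    ∫ x, f x ∂P = 1 / 4 * ∫ x, f (S1 x) ∂P + 3 / 4 * ∫ x, f (S2 x) ∂P := by
  have hint : Integrable f ((1 / 4 : ℝ≥0∞) • P.map S1 + (3 / 4 : ℝ≥0∞) • P.map S2) :=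
    hP ▸ hP.integrable_of_continuous hf
  have hint' := integrable_add_measure.mp hint
  conv_lhs => rw [hP]
  rw [integral_add_measure hint'.1 hint'.2, integral_smul_measure, integral_smul_measure,
    integral_map continuous_S1.aemeasurable hf.aestronglyMeasurable,
    integral_map continuous_S2.aemeasurable hf.aestronglyMeasurable]
  norm_num [ENNReal.toReal_div]

end Integrals

section Moments

variable {P : Measure ℝ} [IsProbabilityMeasure P]

lemma integral_quadratic (hP : SelfSimilar P) (a b c : ℝ) :
    ∫ x, a * x ^ 2 + b * x + c ∂P = a * ∫ x, x ^ 2 ∂P + b * ∫ x, x ∂P + c := by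
  have hsq : Integrable (fun x : ℝ => a * x ^ 2) P := hP.integrable_of_continuous (by fun_prop)
  have hid : Integrable (fun x : ℝ => b * x) P := hP.integrable_of_continuous (by fun_prop)
  have hadd : Integrable (fun x : ℝ => a * x ^ 2 + b * x) P := hsq.add hid
  rw [integral_add hadd (integrable_const c), integral_add hsq hid, integral_const_mul,
    integral_const_mul, integral_const, probReal_univ, one_smul]

lemma integral_id (hP : SelfSimilar P) : ∫ x, x ∂P = 2 / 3 := by
  have h := hP.integral_eq continuous_id'
  have h1 : ∀ x : ℝ, S1 x = 0 * x ^ 2 + 1 / 4 * x + 0 := fun x => by rw [S1]; ring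
  have h2 : ∀ x : ℝ, S2 x = 0 * x ^ 2 + 1 / 2 * x + 1 / 2 := fun x => by rw [S2]; ring
  simp only [h1, h2, hP.integral_quadratic] at h
  linarith

lemma integral_sq (hP : SelfSimilar P) : ∫ x, x ^ 2 ∂P = V + (2 / 3) ^ 2 := by
  have h := hP.integral_eq (continuous_pow 2)
  have h1 : ∀ x : ℝ, S1 x ^ 2 = 1 / 16 * x ^ 2 + 0 * x + 0 := fun x => by rw [S1]; ring
  have h2 : ∀ x : ℝ, S2 x ^ 2 = 1 / 4 * x ^ 2 + 1 / 2 * x + 1 / 4 := fun x => by rw [S2]; ring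
  simp only [h1, h2, hP.integral_quadratic, hP.integral_id] at h
  linarith

lemma integral_sq_affine (hP : SelfSimilar P) (s c : ℝ) :
    ∫ x, (s * x + c) ^ 2 ∂P = s ^ 2 * V + (s * (2 / 3) + c) ^ 2 := by
  have hexp : ∀ x : ℝ, (s * x + c) ^ 2 = s ^ 2 * x ^ 2 + 2 * s * c * x + c ^ 2 :=
    fun x => by ring
  simp only [hexp, hP.integral_quadratic, hP.integral_id, hP.integral_sq]
  ring

end Moments

end SelfSimilar

/-- The squared distance from `x` to the finite set `α`, so that `distortion P α` is its integral.
It takes the junk value `0` when `α` is empty. -/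
def sqDist (α : Finset ℝ) (x : ℝ) : ℝ := sInf ((fun a => (x - a) ^ 2) '' (α : Set ℝ))

section SqDist

variable {α β : Finset ℝ} {a b x y : ℝ}

lemma sqDist_eq_inf' (hα : α.Nonempty) (x : ℝ) : sqDist α x = α.inf' hα fun a => (x - a) ^ 2 :=
  (Finset.inf'_eq_csInf_image α hα _).symm

lemma sqDist_le (ha : a ∈ α) (x : ℝ) : sqDist α x ≤ (x - a) ^ 2 := by
  rw [sqDist_eq_inf' ⟨a, ha⟩]
  exact Finset.inf'_le _ ha

lemma exists_sqDist_eq (hα : α.Nonempty) (x : ℝ) : ∃ a ∈ α, sqDist α x = (x - a) ^ 2 := by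
  rw [sqDist_eq_inf' hα]
  exact Finset.exists_mem_eq_inf' hα _

lemma sqDist_nonneg (α : Finset ℝ) (x : ℝ) : 0 ≤ sqDist α x := by
  refine Real.sInf_nonneg ?_
  rintro _ ⟨a, -, rfl⟩
  exact sq_nonneg _

lemma continuous_sqDist (α : Finset ℝ) : Continuous (sqDist α) := by
  rcases α.eq_empty_or_nonempty with rfl | hα
  · have hzero : sqDist ∅ = 0 := funext fun x => by simp [sqDist]
    exact hzero ▸ continuous_zero
  · rw [funext (sqDist_eq_inf' hα)]
    exact Continuous.finset_inf'_apply hα fun a _ => by fun_prop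

lemma sqDist_singleton (b x : ℝ) : sqDist {b} x = (x - b) ^ 2 := by
  simp [sqDist]

lemma sqDist_le_sqDist (hα : α.Nonempty) (h : ∀ a ∈ α, ∃ b ∈ β, (y - b) ^ 2 ≤ (x - a) ^ 2) :
    sqDist β y ≤ sqDist α x := by
  obtain ⟨a, ha, hax⟩ := exists_sqDist_eq hα x
  obtain ⟨b, hb, hba⟩ := h a ha
  exact (sqDist_le hb y).trans (hba.trans_eq hax.symm)

open scoped Pointwise in
lemma sqDist_image_affine (α : Finset ℝ) (s t x : ℝ) :
    sqDist (α.image fun a => s * a + t) (s * x + t) = s ^ 2 * sqDist α x := by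
  have hset : (fun a => (s * x + t - a) ^ 2) '' (α.image fun a => s * a + t : Finset ℝ) =
      s ^ 2 • (fun a => (x - a) ^ 2) '' (α : Set ℝ) := by
    rw [Finset.coe_image, image_image, ← image_smul, image_image]
    exact image_congr fun a _ => by rw [smul_eq_mul]; ring
  rw [sqDist, hset, Real.sInf_smul_of_nonneg (sq_nonneg s), smul_eq_mul, sqDist]

lemma sq_sub_le_sq_sub_left (hba : b ≤ a) (hy : 2 * y ≤ b + a) : (y - b) ^ 2 ≤ (y - a) ^ 2 := by
  nlinarith

lemma sq_sub_le_sq_sub_right (hab : a ≤ b) (hy : a + b ≤ 2 * y) : (y - b) ^ 2 ≤ (y - a) ^ 2 := by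
  nlinarith

end SqDist

section Words

lemma Sw_affine (σ : List (Fin 2)) (x : ℝ) : Sw σ x = sw σ * x + Sw σ 0 := by
  induction σ with
  | nil => simp [Sw, sw]
  | cons i σ ih =>
    obtain rfl | rfl : i = 0 ∨ i = 1 := by omega
    all_goals
      simp only [Sw, sw, Function.comp_apply, if_true, one_ne_zero, if_false, S1, S2]
      linarith

lemma sw_pos (σ : List (Fin 2)) : 0 < sw σ := by
  induction σ with
  | nil => exact one_pos
  | cons i σ ih => rw [sw]; split_ifs <;> positivity

lemma Sw_append (σ τ : List (Fin 2)) (x : ℝ) : Sw (σ ++ τ) x = Sw σ (Sw τ x) := by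
  induction σ with
  | nil => rfl
  | cons i σ ih => simp only [List.cons_append, Sw, Function.comp_apply, ih]

lemma continuous_Sw (σ : List (Fin 2)) : Continuous (Sw σ) := by
  rw [funext (Sw_affine σ)]
  fun_prop

lemma Sw_bijective (σ : List (Fin 2)) : Function.Bijective (Sw σ) := by
  constructor
  · intro x y hxy
    rw [Sw_affine σ x, Sw_affine σ y] at hxy
    exact mul_left_cancel₀ (sw_pos σ).ne' (add_right_cancel hxy)
  · intro y
    exact ⟨(y - Sw σ 0) / sw σ, by rw [Sw_affine, mul_div_cancel₀ _ (sw_pos σ).ne']; ring⟩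

lemma exists_image_Sw_eq (σ : List (Fin 2)) (β : Finset ℝ) :
    ∃ γ : Finset ℝ, γ.card = β.card ∧ γ.image (Sw σ) = β := by
  obtain ⟨g, -, hg⟩ := Function.bijective_iff_has_inverse.mp (Sw_bijective σ)
  refine ⟨β.image g, Finset.card_image_of_injective β hg.injective, ?_⟩
  rw [Finset.image_image, hg.comp_eq_id, Finset.image_id]

lemma J_eq_Icc (σ : List (Fin 2)) : J σ = Icc (Sw σ 0) (Sw σ 1) := by
  rw [J, funext (Sw_affine σ), image_affine_Icc' (sw_pos σ)]

lemma mapsTo_Sw (σ : List (Fin 2)) : MapsTo (Sw σ) (Icc 0 1) (Icc 0 1) := by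
  induction σ with
  | nil => exact mapsTo_id _
  | cons i σ ih =>
    refine MapsTo.comp (fun x hx => ?_) ih
    split_ifs
    · constructor <;> simp only [S1] <;> linarith [hx.1, hx.2]
    · constructor <;> simp only [S2] <;> linarith [hx.1, hx.2]

lemma J_subset_Icc (σ : List (Fin 2)) : J σ ⊆ Icc 0 1 := (mapsTo_Sw σ).image_subset

lemma measurableSet_J (σ : List (Fin 2)) : MeasurableSet (J σ) := by
  rw [J_eq_Icc]
  exact measurableSet_Icc

lemma volume_real_J (σ : List (Fin 2)) : volume.real (J σ) = sw σ := by
  have h01 : Sw σ 1 = sw σ + Sw σ 0 := by rw [Sw_affine σ 1, mul_one]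
  rw [J_eq_Icc, Real.volume_real_Icc_of_le (by linarith [sw_pos σ]), h01, add_sub_cancel_right]

lemma pw_mul_sw_sq (σ : List (Fin 2)) :
    pw σ * sw σ ^ 2 = (3 : ℝ) ^ (σ.length - cnt σ) / 2 ^ (4 * σ.length + 2 * cnt σ) := by
  rw [eq_div_iff (by positivity)]
  induction σ with
  | nil => simp [pw, sw, cnt]
  | cons i σ ih =>
    have hle : cnt σ ≤ σ.length := List.count_le_length
    obtain rfl | rfl : i = 0 ∨ i = 1 := by omega
    · have hcnt : cnt (0 :: σ) = cnt σ + 1 := by simp [cnt]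
      simp only [pw, sw, if_true, hcnt, List.length_cons, Nat.add_sub_add_right, ← ih]
      ring
    · have hcnt : cnt (1 :: σ) = cnt σ := by simp [cnt]
      simp only [pw, sw, one_ne_zero, if_false, hcnt, List.length_cons, Nat.sub_add_comm hle,
        pow_succ (3 : ℝ), ← ih]
      ring

end Words

namespace SelfSimilar

section Cylinders

variable {P : Measure ℝ} [IsFiniteMeasure P]

lemma measureReal_eq (hP : SelfSimilar P) {A : Set ℝ} (hA : MeasurableSet A) :
    P.real A = 1 / 4 * P.real (S1 ⁻¹' A) + 3 / 4 * P.real (S2 ⁻¹' A) := by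
  simp only [measureReal_def]
  rw [hP.measure_eq hA, ENNReal.toReal_add (by finiteness) (by finiteness)]
  norm_num [ENNReal.toReal_mul, ENNReal.toReal_div]

lemma measureReal_eq_zero_of_disjoint (hP : SelfSimilar P) {A : Set ℝ}
    (hA : Disjoint A (Icc 0 1)) : P.real A = 0 := by
  rw [measureReal_eq_zero_iff]
  exact measure_mono_null hA.subset_compl_right (ae_iff.mp hP.ae_mem_Icc)

lemma measureReal_S1_image (hP : SelfSimilar P) {A : Set ℝ} (hA : MeasurableSet A)
    (hA1 : A ⊆ Icc 0 1) : P.real (S1 '' A) = 1 / 4 * P.real A := by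
  have hinj : Function.Injective S1 := fun x y hxy => by simp only [S1] at hxy; linarith
  have hdisj : Disjoint (S2 ⁻¹' (S1 '' A)) (Icc 0 1) := by
    rw [disjoint_left]
    rintro x ⟨y, hy, hyx⟩ hx
    simp only [S1, S2] at hyx
    linarith [hx.1, (hA1 hy).2]
  rw [hP.measureReal_eq (hA.image_of_continuousOn_injOn continuous_S1.continuousOn hinj.injOn),
    preimage_image_eq A hinj, hP.measureReal_eq_zero_of_disjoint hdisj]
  ring

lemma measureReal_S2_image (hP : SelfSimilar P) {A : Set ℝ} (hA : MeasurableSet A)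
    (hA1 : A ⊆ Icc 0 1) : P.real (S2 '' A) = 3 / 4 * P.real A := by
  have hinj : Function.Injective S2 := fun x y hxy => by simp only [S2] at hxy; linarith
  have hdisj : Disjoint (S1 ⁻¹' (S2 '' A)) (Icc 0 1) := by
    rw [disjoint_left]
    rintro x ⟨y, hy, hyx⟩ hx
    simp only [S1, S2] at hyx
    linarith [hx.2, (hA1 hy).1]
  rw [hP.measureReal_eq (hA.image_of_continuousOn_injOn continuous_S2.continuousOn hinj.injOn),
    preimage_image_eq A hinj, hP.measureReal_eq_zero_of_disjoint hdisj]
  ring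

end Cylinders

section Cylinders

variable {P : Measure ℝ} [IsProbabilityMeasure P]

lemma measureReal_J (hP : SelfSimilar P) (σ : List (Fin 2)) : P.real (J σ) = pw σ := by
  induction σ with
  | nil =>
    rw [J, Sw, image_id, measureReal_def, (prob_compl_eq_zero_iff measurableSet_Icc).mp
      (ae_iff.mp hP.ae_mem_Icc)]
    rfl
  | cons i σ ih =>
    rw [J, Sw, image_comp, pw, ← ih]
    split_ifs
    · exact hP.measureReal_S1_image (measurableSet_J σ) (J_subset_Icc σ)
    · exact hP.measureReal_S2_image (measurableSet_J σ) (J_subset_Icc σ)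

lemma qnt_eq (hP : SelfSimilar P) (σ : List (Fin 2)) : qnt P σ = pw σ * sw σ ^ 2 := by
  rw [← hP.measureReal_J, ← volume_real_J]
  rfl

end Cylinders

end SelfSimilar

/-- The contribution of the cylinder `J σ` to the distortion of `α`, divided by its mass `pw σ`:
the mean of the squared distance to `α` under the push-forward of `P` by `Sw σ`. -/
def cylinderError (P : Measure ℝ) (α : Finset ℝ) (σ : List (Fin 2)) : ℝ :=
  ∫ x, sqDist α (Sw σ x) ∂P

section CylinderError

variable {P : Measure ℝ} {α β : Finset ℝ} {σ : List (Fin 2)}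

lemma cylinderError_nil (P : Measure ℝ) (α : Finset ℝ) : cylinderError P α [] = distortion P α :=
  rfl

lemma cylinderError_nonneg (P : Measure ℝ) (α : Finset ℝ) (σ : List (Fin 2)) :
    0 ≤ cylinderError P α σ :=
  integral_nonneg fun _ => sqDist_nonneg α _

lemma distortion_nonneg (P : Measure ℝ) (α : Finset ℝ) : 0 ≤ distortion P α :=
  cylinderError_nonneg P α []

lemma cylinderError_image_Sw (P : Measure ℝ) (γ : Finset ℝ) (σ : List (Fin 2)) :
    cylinderError P (γ.image (Sw σ)) σ = sw σ ^ 2 * distortion P γ := by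
  have himage : ∀ x, sqDist (γ.image (Sw σ)) (Sw σ x) = sw σ ^ 2 * sqDist γ x := fun x => by
    rw [funext (Sw_affine σ), sqDist_image_affine]
  simp only [cylinderError, himage, integral_const_mul]
  rfl

lemma continuous_sqDist_Sw (α : Finset ℝ) (σ : List (Fin 2)) :
    Continuous fun x => sqDist α (Sw σ x) :=
  (continuous_sqDist α).comp (continuous_Sw σ)

namespace SelfSimilar

section FiniteMeasure

variable [IsFiniteMeasure P]

lemma cylinderError_eq_add (hP : SelfSimilar P) (α : Finset ℝ) (σ : List (Fin 2)) :
    cylinderError P α σ =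
      1 / 4 * cylinderError P α (σ ++ [0]) + 3 / 4 * cylinderError P α (σ ++ [1]) := by
  simp only [cylinderError, Sw_append]
  exact hP.integral_eq (continuous_sqDist_Sw α σ)

lemma distortion_eq_add (hP : SelfSimilar P) (α : Finset ℝ) :
    distortion P α = 1 / 4 * cylinderError P α [0] + 3 / 4 * cylinderError P α [1] :=
  hP.cylinderError_eq_add α []

lemma cylinderError_le_cylinderError (hP : SelfSimilar P) (hα : α.Nonempty)
    (h : ∀ y ∈ J σ, ∀ a ∈ α, ∃ b ∈ β, (y - b) ^ 2 ≤ (y - a) ^ 2) :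
    cylinderError P β σ ≤ cylinderError P α σ :=
  hP.integral_mono (continuous_sqDist_Sw β σ) (continuous_sqDist_Sw α σ) fun _ hx =>
    sqDist_le_sqDist hα (h _ (mem_image_of_mem _ hx))

lemma cylinderError_anti (hP : SelfSimilar P) (hβ : β.Nonempty) (hβα : β ⊆ α)
    (σ : List (Fin 2)) : cylinderError P α σ ≤ cylinderError P β σ :=
  hP.cylinderError_le_cylinderError hβ fun _ _ b hb => ⟨b, hβα hb, le_rfl⟩

end FiniteMeasure

section ProbabilityMeasure

variable [IsProbabilityMeasure P]

lemma integral_sq_Sw_sub (hP : SelfSimilar P) (σ : List (Fin 2)) (b : ℝ) :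
    ∫ x, (Sw σ x - b) ^ 2 ∂P = sw σ ^ 2 * V + (Sw σ (2 / 3) - b) ^ 2 := by
  rw [funext (Sw_affine σ)]
  simp only [add_sub_assoc]
  exact hP.integral_sq_affine _ _

lemma cylinderError_singleton (hP : SelfSimilar P) (σ : List (Fin 2)) (b : ℝ) :
    cylinderError P {b} σ = sw σ ^ 2 * V + (Sw σ (2 / 3) - b) ^ 2 := by
  simp only [cylinderError, sqDist_singleton, hP.integral_sq_Sw_sub]

lemma distortion_singleton (hP : SelfSimilar P) (b : ℝ) :
    distortion P {b} = V + (2 / 3 - b) ^ 2 := by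
  rw [← cylinderError_nil, hP.cylinderError_singleton, sw, one_pow, one_mul]
  rfl

lemma le_cylinderError_of_nearest (hP : SelfSimilar P) (hα : α.Nonempty) {b : ℝ}
    (h : ∀ y ∈ J σ, ∀ a ∈ α, (y - b) ^ 2 ≤ (y - a) ^ 2) :
    sw σ ^ 2 * V + (Sw σ (2 / 3) - b) ^ 2 ≤ cylinderError P α σ := by
  rw [← hP.cylinderError_singleton]
  exact hP.cylinderError_le_cylinderError hα fun y hy a ha =>
    ⟨b, Finset.mem_singleton_self b, h y hy a ha⟩

lemma sub_integral_le_cylinderError (hP : SelfSimilar P) {b : ℝ} {g : ℝ → ℝ} (hg : Continuous g)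
    (h : ∀ x ∈ Icc (0 : ℝ) 1, (Sw σ x - b) ^ 2 - g x ≤ sqDist α (Sw σ x)) :
    sw σ ^ 2 * V + (Sw σ (2 / 3) - b) ^ 2 - ∫ x, g x ∂P ≤ cylinderError P α σ := by
  have hcont : Continuous fun x => (Sw σ x - b) ^ 2 :=
    ((continuous_Sw σ).sub continuous_const).pow 2
  rw [← hP.integral_sq_Sw_sub,
    ← integral_sub (hP.integrable_of_continuous hcont) (hP.integrable_of_continuous hg)]
  exact hP.integral_mono (hcont.sub hg) (continuous_sqDist_Sw α σ) h

end ProbabilityMeasure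

end SelfSimilar

end CylinderError

section QuantizationError

variable {P : Measure ℝ} {α β : Finset ℝ} {m n : ℕ}

lemma qError_le_distortion (P : Measure ℝ) (hα : α.Nonempty) (hn : α.card ≤ n) :
    qError P n ≤ distortion P α := by
  refine csInf_le ⟨0, ?_⟩ ⟨α, hα, hn, rfl⟩
  rintro _ ⟨β, -, -, rfl⟩
  exact distortion_nonneg P β

lemma le_qError (hn : 0 < n) {r : ℝ}
    (h : ∀ α : Finset ℝ, α.Nonempty → α.card ≤ n → r ≤ distortion P α) : r ≤ qError P n := by
  refine le_csInf ⟨_, {0}, Finset.singleton_nonempty 0, hn, rfl⟩ ?_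
  rintro _ ⟨α, hα, hcard, rfl⟩
  exact h α hα hcard

lemma qError_nonneg (P : Measure ℝ) (n : ℕ) : 0 ≤ qError P n := by
  refine Real.sInf_nonneg ?_
  rintro _ ⟨α, -, -, rfl⟩
  exact distortion_nonneg P α

lemma qError_anti (P : Measure ℝ) (hm : 0 < m) (hmn : m ≤ n) : qError P n ≤ qError P m :=
  le_qError hm fun _ hα hcard => qError_le_distortion P hα (hcard.trans hmn)

lemma IsOptimal.distortion_le (hα : IsOptimal P n α) (hβ : β.Nonempty) (hn : β.card ≤ n) :
    distortion P α ≤ distortion P β :=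
  hα.2.2.trans_le (qError_le_distortion P hβ hn)

lemma isOptimal_of_forall_distortion_le (hα : α.Nonempty) (hn : α.card ≤ n)
    (h : ∀ β : Finset ℝ, β.Nonempty → β.card ≤ n → distortion P α ≤ distortion P β) :
    IsOptimal P n α :=
  ⟨hα, hn, le_antisymm (le_qError (hα.card_pos.trans_le hn) h) (qError_le_distortion P hα hn)⟩

lemma sw_sq_mul_qError_le_cylinderError (P : Measure ℝ) (hα : α.Nonempty) (hn : α.card ≤ n)
    (σ : List (Fin 2)) : sw σ ^ 2 * qError P n ≤ cylinderError P α σ := by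
  obtain ⟨γ, hcard, rfl⟩ := exists_image_Sw_eq σ α
  rw [cylinderError_image_Sw]
  exact mul_le_mul_of_nonneg_left
    (qError_le_distortion P (Finset.image_nonempty.mp hα) (hcard.trans_le hn)) (sq_nonneg _)

lemma SelfSimilar.sw_sq_mul_qError_le_of_image [IsFiniteMeasure P] (hP : SelfSimilar P)
    {σ : List (Fin 2)} (hα : α.Nonempty) (hβ : β.Nonempty) (hn : β.card ≤ n) (f : ℝ → ℝ)
    (h : ∀ y ∈ J σ, ∀ a ∈ α, ∃ b ∈ β, (y - f b) ^ 2 ≤ (y - a) ^ 2) :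
    sw σ ^ 2 * qError P n ≤ cylinderError P α σ :=
  calc sw σ ^ 2 * qError P n ≤ cylinderError P (β.image f) σ :=
        sw_sq_mul_qError_le_cylinderError P (hβ.image f) (Finset.card_image_le.trans hn) σ
    _ ≤ cylinderError P α σ := hP.cylinderError_le_cylinderError hα fun y hy a ha => by
        obtain ⟨b, hb, hba⟩ := h y hy a ha
        exact ⟨f b, Finset.mem_image_of_mem f hb, hba⟩

lemma SelfSimilar.qError_one [IsProbabilityMeasure P] (hP : SelfSimilar P) : qError P 1 = V := by
  refine le_antisymm ?_ (le_qError one_pos fun α hα hcard => ?_)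
  · refine (qError_le_distortion P (Finset.singleton_nonempty (2 / 3)) le_rfl).trans_eq ?_
    rw [hP.distortion_singleton, sub_self, zero_pow two_ne_zero, add_zero]
  · obtain ⟨b, rfl⟩ := Finset.card_eq_one.mp (hcard.antisymm hα.card_pos)
    rw [hP.distortion_singleton]
    exact le_add_of_nonneg_right (sq_nonneg _)

end QuantizationError

/-- The union of the copies of `β` and `γ` in the first-level cylinders `J [0]` and `J [1]`. -/
def join (β γ : Finset ℝ) : Finset ℝ := β.image S1 ∪ γ.image S2

section Join

variable {P : Measure ℝ} {β γ : Finset ℝ}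

lemma nonempty_join_left (hβ : β.Nonempty) (γ : Finset ℝ) : (join β γ).Nonempty :=
  (hβ.image S1).mono Finset.subset_union_left

lemma card_join_le (β γ : Finset ℝ) : (join β γ).card ≤ β.card + γ.card :=
  (Finset.card_union_le _ _).trans (Nat.add_le_add Finset.card_image_le Finset.card_image_le)

lemma cylinderError_image_S1 (P : Measure ℝ) (β : Finset ℝ) :
    cylinderError P (β.image S1) [0] = 1 / 16 * distortion P β := by
  have h := cylinderError_image_Sw P β [0]
  norm_num [Sw, sw] at h ⊢
  exact h

lemma cylinderError_image_S2 (P : Measure ℝ) (γ : Finset ℝ) :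
    cylinderError P (γ.image S2) [1] = 1 / 4 * distortion P γ := by
  have h := cylinderError_image_Sw P γ [1]
  norm_num [Sw, sw] at h ⊢
  exact h

lemma SelfSimilar.distortion_join_le [IsFiniteMeasure P] (hP : SelfSimilar P) (hβ : β.Nonempty)
    (hγ : γ.Nonempty) :
    distortion P (join β γ) ≤ 1 / 64 * distortion P β + 3 / 16 * distortion P γ := by
  have h0 : cylinderError P (join β γ) [0] ≤ 1 / 16 * distortion P β :=
    (hP.cylinderError_anti (hβ.image S1) Finset.subset_union_left [0]).trans_eq
      (cylinderError_image_S1 P β)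
  have h1 : cylinderError P (join β γ) [1] ≤ 1 / 4 * distortion P γ :=
    (hP.cylinderError_anti (hγ.image S2) Finset.subset_union_right [1]).trans_eq
      (cylinderError_image_S2 P γ)
  rw [hP.distortion_eq_add]
  linarith

lemma SelfSimilar.qError_add_le [IsFiniteMeasure P] (hP : SelfSimilar P) {i j : ℕ} (hi : 0 < i)
    (hj : 0 < j) : qError P (i + j) ≤ 1 / 64 * qError P i + 3 / 16 * qError P j := by
  have hγ : ∀ γ : Finset ℝ, γ.Nonempty → γ.card ≤ j →
      qError P (i + j) ≤ 1 / 64 * qError P i + 3 / 16 * distortion P γ := fun γ hγ hγj => by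
    have hle : 64 * (qError P (i + j) - 3 / 16 * distortion P γ) ≤ qError P i :=
      le_qError hi fun β hβ hβi => by
        have hcard := (card_join_le β γ).trans (Nat.add_le_add hβi hγj)
        linarith [qError_le_distortion P (nonempty_join_left hβ γ) hcard,
          hP.distortion_join_le hβ hγ]
    linarith
  have hle : 16 / 3 * (qError P (i + j) - 1 / 64 * qError P i) ≤ qError P j :=
    le_qError hj fun γ hγ' hγj => by linarith [hγ γ hγ' hγj]
  linarith

end Join

/-- The integrated distribution function `∫ (t - x)⁺ dP(x)`, which measures what is lost when the
cut between two Voronoi regions is moved. -/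
def hinge (P : Measure ℝ) (t : ℝ) : ℝ := ∫ x, max (t - x) 0 ∂P

namespace SelfSimilar

section Hinge

variable {P : Measure ℝ} [IsProbabilityMeasure P] {t : ℝ}

lemma integral_const_sub_mul (hP : SelfSimilar P) (t b : ℝ) :
    ∫ x, t - b * x ∂P = t - b * (2 / 3) := by
  have hlin : Integrable (fun x : ℝ => b * x) P := hP.integrable_of_continuous (by fun_prop)
  rw [integral_sub (integrable_const t) hlin, integral_const_mul, hP.integral_id, integral_const,
    probReal_univ, one_smul]

lemma hinge_eq_of_one_le (hP : SelfSimilar P) (ht : 1 ≤ t) : hinge P t = t - 2 / 3 := by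
  have h : EqOn (fun x => max (t - x) 0) (fun x => t - 1 * x) (Icc 0 1) := fun x hx => by
    simp only [one_mul]
    exact max_eq_left (by linarith [hx.2])
  rw [hinge, hP.integral_congr h, hP.integral_const_sub_mul, one_mul]

lemma hinge_le_self (hP : SelfSimilar P) (ht : 0 ≤ t) : hinge P t ≤ t := by
  calc hinge P t ≤ ∫ _, t ∂P := hP.integral_mono (by fun_prop) continuous_const fun x hx =>
        max_le (by linarith [hx.1]) ht
    _ = t := by simp

lemma hinge_eq_of_le_half (hP : SelfSimilar P) (ht : t ≤ 1 / 2) :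
    hinge P t = 1 / 16 * hinge P (4 * t) := by
  have h1 : ∀ x, max (t - S1 x) 0 = 1 / 4 * max (4 * t - x) 0 := fun x => by
    rw [S1, mul_max_of_nonneg _ _ (by norm_num)]
    ring_nf
  have h2 : EqOn (fun x => max (t - S2 x) 0) (fun _ => 0) (Icc 0 1) := fun x hx =>
    max_eq_right (by rw [S2]; linarith [hx.1])
  have h := hP.integral_eq (f := fun x => max (t - x) 0) (by fun_prop)
  rw [hP.integral_congr h2] at h
  simp only [h1, integral_const_mul, integral_zero] at h
  rw [hinge, h, hinge]
  ring

lemma hinge_eq_of_quarter_le (hP : SelfSimilar P) (ht : 1 / 4 ≤ t) :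
    hinge P t = 1 / 4 * (t - 1 / 6) + 3 / 8 * hinge P (2 * t - 1) := by
  have h1 : EqOn (fun x => max (t - S1 x) 0) (fun x => t - 1 / 4 * x) (Icc 0 1) := fun x hx => by
    simp only [S1]
    rw [max_eq_left (by linarith [hx.2])]
    ring
  have h2 : ∀ x, max (t - S2 x) 0 = 1 / 2 * max (2 * t - 1 - x) 0 := fun x => by
    rw [S2, mul_max_of_nonneg _ _ (by norm_num)]
    ring_nf
  have h := hP.integral_eq (f := fun x => max (t - x) 0) (by fun_prop)
  rw [hP.integral_congr h1, hP.integral_const_sub_mul] at h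
  simp only [h2, integral_const_mul] at h
  rw [hinge, h, hinge]
  ring

lemma hinge_le_add_pow (hP : SelfSimilar P) (k : ℕ) (ht : 0 ≤ t) :
    hinge P t ≤ 3 / 8 * t ^ 2 + (3 / 8) ^ k := by
  induction k generalizing t with
  | zero =>
    rcases le_total t 1 with ht1 | ht1
    · linarith [hP.hinge_le_self ht, sq_nonneg t]
    · rw [hP.hinge_eq_of_one_le ht1]
      linarith [sq_nonneg (3 * t - 4)]
  | succ k ih =>
    have hpow : (0 : ℝ) < (3 / 8) ^ k := by positivity
    rw [pow_succ (3 / 8 : ℝ)]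
    rcases le_total t (1 / 2) with ht2 | ht2
    · have h := ih (t := 4 * t) (by linarith)
      rw [hP.hinge_eq_of_le_half ht2]
      linarith
    rcases le_total t 1 with ht1 | ht1
    · have h := ih (t := 2 * t - 1) (by linarith)
      rw [hP.hinge_eq_of_quarter_le (by linarith)]
      nlinarith [mul_nonneg (sub_nonneg.mpr ht2) (sub_nonneg.mpr ht1)]
    · rw [hP.hinge_eq_of_one_le ht1]
      linarith [sq_nonneg (3 * t - 4)]

lemma hinge_le (hP : SelfSimilar P) (ht : 0 ≤ t) : hinge P t ≤ 3 / 8 * t ^ 2 := by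
  refine le_of_forall_pos_le_add fun ε hε => ?_
  obtain ⟨k, hk⟩ := exists_pow_lt_of_lt_one hε (show (3 / 8 : ℝ) < 1 by norm_num)
  linarith [hP.hinge_le_add_pow k ht]

lemma integral_max_sub_half (hP : SelfSimilar P) : ∫ x, max (x - 1 / 2) 0 ∂P = 1 / 4 := by
  have h : ∀ x : ℝ, max (x - 1 / 2) 0 = max (1 / 2 - x) 0 - (1 / 2 - 1 * x) := fun x => by
    rcases le_total x (1 / 2) with hx | hx
    · rw [max_eq_right (by linarith), max_eq_left (by linarith)]; ring
    · rw [max_eq_left (by linarith), max_eq_right (by linarith)]; ring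
  have hhinge : ∫ x, max (1 / 2 - x) 0 ∂P = 1 / 12 := by
    rw [← hinge, hP.hinge_eq_of_le_half le_rfl, hP.hinge_eq_of_one_le (by norm_num)]
    norm_num
  simp only [h]
  rw [integral_sub (hP.integrable_of_continuous (by fun_prop))
    (hP.integrable_of_continuous (by fun_prop)), hhinge, hP.integral_const_sub_mul]
  norm_num

end Hinge

section TwoPoints

variable {P : Measure ℝ} [IsProbabilityMeasure P] {a b : ℝ}

lemma le_cylinderError_pair_zero (hP : SelfSimilar P) (hab : a ≤ b) (hsum : 1 ≤ a + b) :
    V / 16 + (1 / 6 - a) ^ 2 ≤ cylinderError P {a, b} [0] := by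
  have h := hP.le_cylinderError_of_nearest (α := {a, b}) (σ := [0]) (b := a) (by simp)
    fun y hy c hc => by
      norm_num [J_eq_Icc, Sw, S1] at hy
      obtain rfl | rfl : c = a ∨ c = b := by simpa using hc
      · exact le_rfl
      · exact sq_sub_le_sq_sub_left hab (by linarith)
  norm_num [Sw, sw, S1] at h ⊢
  exact h

lemma le_cylinderError_pair_one (hP : SelfSimilar P) (hab : a ≤ b) :
    V / 4 + (5 / 6 - b) ^ 2 - (b - a) * hinge P (a + b - 1) ≤ cylinderError P {a, b} [1] := by
  have h := hP.sub_integral_le_cylinderError (α := {a, b}) (σ := [1]) (b := b)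
    (g := fun x => (b - a) * max (a + b - 1 - x) 0) (by fun_prop) fun x _ => by
      have hmax : 0 ≤ (b - a) * max (a + b - 1 - x) 0 :=
        mul_nonneg (sub_nonneg.mpr hab) (le_max_right _ _)
      have hmax' : (b - a) * (a + b - 1 - x) ≤ (b - a) * max (a + b - 1 - x) 0 :=
        mul_le_mul_of_nonneg_left (le_max_left _ _) (sub_nonneg.mpr hab)
      obtain ⟨c, hc, hcx⟩ := exists_sqDist_eq (α := {a, b}) (by simp) (Sw [1] x)
      have hx : Sw [1] x = x / 2 + 1 / 2 := rfl
      rw [hcx, hx]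
      obtain rfl | rfl : c = a ∨ c = b := by simpa using hc
      · linarith
      · linarith
  rw [integral_const_mul, ← hinge] at h
  norm_num [Sw, sw, S2] at h ⊢
  linarith

-- With `ε = a + b - 1` and `d = b - a - 2/3 + ε/2`, the excess over `13/64 * V` is at least
-- `d²/4 - 9/32 dε² + 9/64 ε³ = (d/2 - 9/32 ε²)² + (9/64 - 81/1024 ε) ε³`.
lemma lt_distortion_pair (hP : SelfSimilar P) (hab : a < b) (hsum : 1 < a + b) :
    13 / 64 * V < distortion P {a, b} := by
  rcases le_total 2 (a + b) with hsum2 | hsum2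
  · have h := hP.le_cylinderError_of_nearest (α := {a, b}) (σ := []) (b := a) (by simp)
      fun y hy c hc => by
        simp only [J_eq_Icc, Sw, id, mem_Icc] at hy
        obtain rfl | rfl : c = a ∨ c = b := by simpa using hc
        · exact le_rfl
        · exact sq_sub_le_sq_sub_left hab.le (by linarith)
    rw [sw, cylinderError_nil] at h
    linarith [sq_nonneg (Sw [] (2 / 3) - a)]
  · obtain ⟨ε, hε⟩ : ∃ ε, ε = a + b - 1 := ⟨_, rfl⟩
    have hε0 : 0 < ε := by linarith
    have h0 := hP.le_cylinderError_pair_zero hab.le hsum.le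
    have h1 := hP.le_cylinderError_pair_one hab.le
    have hhinge : (b - a) * hinge P (a + b - 1) ≤ (b - a) * (3 / 8 * ε ^ 2) := by
      rw [← hε]
      exact mul_le_mul_of_nonneg_left (hP.hinge_le hε0.le) (by linarith)
    have hpos : 0 < (9 / 64 - 81 / 1024 * ε) * ε ^ 3 :=
      mul_pos (by linarith) (pow_pos hε0 3)
    have hexcess :
        1 / 4 * (1 / 6 - a) ^ 2 + 3 / 4 * ((5 / 6 - b) ^ 2 - (b - a) * (3 / 8 * ε ^ 2)) =
        ((b - a - 2 / 3 + ε / 2) / 2 - 9 / 32 * ε ^ 2) ^ 2 +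
          (9 / 64 - 81 / 1024 * ε) * ε ^ 3 := by
      rw [hε]; ring
    rw [hP.distortion_eq_add]
    linarith [sq_nonneg ((b - a - 2 / 3 + ε / 2) / 2 - 9 / 32 * ε ^ 2)]

end TwoPoints

end SelfSimilar

-- On `[0, 1]` the excess of the squared distance to `b` over that to `3 / 8` lies below a hinge,
-- by convexity.
lemma sq_sub_sub_hinge_le {b x : ℝ} (hb0 : 0 ≤ b) (hb : b ≤ 1 / 8) (hx : x ≤ 1) :
    (x / 4 - b) ^ 2 - (3 / 8 - b) * (1 / 4 - 2 * b) * max (x - 1 / 2) 0 ≤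
      (x / 4 - 3 / 8) ^ 2 := by
  have hchord : x / 2 - b - 3 / 8 ≤ (1 / 4 - 2 * b) * max (x - 1 / 2) 0 := by
    rcases le_total x (1 / 2) with hx2 | hx2
    · rw [max_eq_right (by linarith)]
      linarith
    · rw [max_eq_left (by linarith)]
      nlinarith
  linarith [mul_le_mul_of_nonneg_left hchord (show 0 ≤ 3 / 8 - b by linarith)]

/-- The Voronoi region of the point `a` of `α` contains the gap `[1/4, 1/2]` between the two
first-level cylinders in its interior: its neighbours `c` on either side satisfy
`(c + a) / 2 < 1/4`, respectively `1/2 < (a + c) / 2`. This is what never happens in an optimal set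
of `n ≥ 2` points. -/
structure Straddles (α : Finset ℝ) (a : ℝ) : Prop where
  mem : a ∈ α
  add_lt : ∀ c ∈ α, c < a → c + a < 1 / 2
  lt_add : ∀ c ∈ α, a < c → 1 < a + c

namespace Straddles

section CylinderBounds

variable {P : Measure ℝ} {α : Finset ℝ} {a : ℝ} {k : ℕ}

lemma nonempty (h : Straddles α a) : α.Nonempty := ⟨a, h.mem⟩

lemma trichotomy (h : Straddles α a) {c : ℝ} (hc : c ∈ α) :
    c < a ∧ c + a < 1 / 2 ∨ c = a ∨ a < c ∧ 1 < a + c := by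
  rcases lt_trichotomy c a with hca | hca | hca
  · exact Or.inl ⟨hca, h.add_lt c hc hca⟩
  · exact Or.inr (Or.inl hca)
  · exact Or.inr (Or.inr ⟨hca, h.lt_add c hc hca⟩)

-- Points beyond `1` are first moved to `1`, so that those right of `a` beat those left of it.
lemma qError_le_cylinderError_one_one [IsFiniteMeasure P] (h : Straddles α a)
    (hP : SelfSimilar P) (ha : a ≤ 3 / 8) (hk : 0 < k) (hcard : (α.filter (a < ·)).card ≤ k) :
    1 / 16 * qError P k ≤ cylinderError P α [1, 1] := by
  have hJ : ∀ y ∈ J [1, 1], 3 / 4 ≤ y ∧ y ≤ 1 := fun y hy => by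
    norm_num [J_eq_Icc, Sw, S2] at hy
    exact hy
  have hsw : sw [1, 1] ^ 2 = 1 / 16 := by norm_num [sw]
  rw [← hsw]
  rcases (α.filter (a < ·)).eq_empty_or_nonempty with hempty | hright
  · refine hP.sw_sq_mul_qError_le_of_image h.nonempty (Finset.singleton_nonempty 1) hk id
      fun y hy c hc => ⟨1, Finset.mem_singleton_self 1, ?_⟩
    have hca : c ≤ a := not_lt.mp (Finset.filter_eq_empty_iff.mp hempty hc)
    exact sq_sub_le_sq_sub_right (by simp only [id]; linarith)
      (by simp only [id]; linarith [(hJ y hy).1])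
  · refine hP.sw_sq_mul_qError_le_of_image h.nonempty hright hcard (min · 1) fun y hy c hc => ?_
    rcases lt_or_ge a c with hac | hca
    · refine ⟨c, Finset.mem_filter.mpr ⟨hc, hac⟩, ?_⟩
      rcases le_total c 1 with hc1 | hc1
      · rw [min_eq_left hc1]
      · rw [min_eq_right hc1]
        exact sq_sub_le_sq_sub_left hc1 (by linarith [(hJ y hy).2])
    · obtain ⟨b, hb⟩ := hright
      obtain ⟨hbα, hab⟩ := Finset.mem_filter.mp hb
      have hb1 : 1 < a + b := h.lt_add b hbα hab
      refine ⟨b, hb, sq_sub_le_sq_sub_right (le_min (by linarith) (by linarith)) ?_⟩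
      linarith [(hJ y hy).1, min_le_right b 1]

lemma qError_le_cylinderError_one [IsFiniteMeasure P] (h : Straddles α a) (hP : SelfSimilar P)
    (hcard : (α.filter (a ≤ ·)).card ≤ k) : 1 / 4 * qError P k ≤ cylinderError P α [1] := by
  have hJ : ∀ y ∈ J [1], 1 / 2 ≤ y ∧ y ≤ 1 := fun y hy => by
    norm_num [J_eq_Icc, Sw, S2] at hy
    exact hy
  have hsw : sw [1] ^ 2 = 1 / 4 := by norm_num [sw]
  have ha_mem : a ∈ α.filter (a ≤ ·) := Finset.mem_filter.mpr ⟨h.mem, le_rfl⟩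
  rw [← hsw]
  refine hP.sw_sq_mul_qError_le_of_image h.nonempty ⟨a, ha_mem⟩ hcard (min · 1) fun y hy c hc => ?_
  rcases lt_or_ge c a with hca | hac
  · have hca' := h.add_lt c hc hca
    refine ⟨a, ha_mem, sq_sub_le_sq_sub_right (le_min hca.le (by linarith)) ?_⟩
    linarith [(hJ y hy).1, min_le_left a 1]
  · refine ⟨c, Finset.mem_filter.mpr ⟨hc, hac⟩, ?_⟩
    rcases le_total c 1 with hc1 | hc1
    · rw [min_eq_left hc1]
    · rw [min_eq_right hc1]
      exact sq_sub_le_sq_sub_left hc1 (by linarith [(hJ y hy).2])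

variable [IsProbabilityMeasure P]

lemma le_cylinderError_one_zero (h : Straddles α a) (hP : SelfSimilar P) (ha : a ≤ 3 / 8) :
    V / 64 + (a - 5 / 12) ^ 2 ≤ cylinderError P α [1, 0] := by
  have hbound := hP.le_cylinderError_of_nearest (σ := [1, 0]) (b := 1 - a) h.nonempty
    fun y hy c hc => by
      norm_num [J_eq_Icc, Sw, S1, S2] at hy
      rcases h.trichotomy hc with ⟨hca, -⟩ | rfl | ⟨-, hac⟩
      · exact sq_sub_le_sq_sub_right (by linarith) (by linarith)
      · exact sq_sub_le_sq_sub_right (by linarith) (by linarith)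
      · exact sq_sub_le_sq_sub_left (by linarith) (by linarith)
  norm_num [Sw, sw, S1, S2] at hbound
  linarith

lemma le_cylinderError_zero_one_one (h : Straddles α a) (hP : SelfSimilar P)
    (ha : 5 / 16 ≤ a) : V / 256 + (a - 13 / 48) ^ 2 ≤ cylinderError P α [0, 1, 1] := by
  have hbound := hP.le_cylinderError_of_nearest (σ := [0, 1, 1]) (b := 1 / 2 - a) h.nonempty
    fun y hy c hc => by
      norm_num [J_eq_Icc, Sw, S1, S2] at hy
      rcases h.trichotomy hc with ⟨-, hca⟩ | rfl | ⟨hac, -⟩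
      · exact sq_sub_le_sq_sub_right (by linarith) (by linarith)
      · exact sq_sub_le_sq_sub_left (by linarith) (by linarith)
      · exact sq_sub_le_sq_sub_left (by linarith) (by linarith)
  norm_num [Sw, sw, S1, S2] at hbound
  linarith

lemma le_cylinderError_zero_one (h : Straddles α a) (hP : SelfSimilar P) (ha : 3 / 8 ≤ a) :
    V / 64 + (1 / 12) ^ 2 ≤ cylinderError P α [0, 1] := by
  have hbound := hP.le_cylinderError_of_nearest (σ := [0, 1]) (b := 1 / 8) h.nonempty
    fun y hy c hc => by
      norm_num [J_eq_Icc, Sw, S1, S2] at hy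
      rcases h.trichotomy hc with ⟨-, hca⟩ | rfl | ⟨hac, -⟩
      · exact sq_sub_le_sq_sub_right (by linarith) (by linarith)
      · exact sq_sub_le_sq_sub_left (by linarith) (by linarith)
      · exact sq_sub_le_sq_sub_left (by linarith) (by linarith)
  norm_num [Sw, sw, S1, S2] at hbound
  linarith

lemma le_cylinderError_zero_of_forall_le (h : Straddles α a) (hP : SelfSimilar P)
    (hmin : ∀ c ∈ α, a ≤ c) : V / 16 + (1 / 6 - a) ^ 2 ≤ cylinderError P α [0] := by
  have hbound := hP.le_cylinderError_of_nearest (σ := [0]) (b := a) h.nonempty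
    fun y hy c hc => by
      norm_num [J_eq_Icc, Sw, S1] at hy
      rcases h.trichotomy hc with ⟨hca, -⟩ | rfl | ⟨hac, hac'⟩
      · exact absurd (hmin c hc) (not_le.mpr hca)
      · exact le_rfl
      · exact sq_sub_le_sq_sub_left hac.le (by linarith)
  norm_num [Sw, sw, S1] at hbound
  linarith

lemma lt_cylinderError_zero_of_unique_left (h : Straddles α a) (hP : SelfSimilar P)
    (ha : 3 / 8 ≤ a) {c : ℝ} (hc : c ∈ α) (hca : c < a) (huniq : ∀ d ∈ α, d < a → d = c) :
    V / 16 < cylinderError P α [0] := by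
  have hc8 : c < 1 / 8 := by linarith [h.add_lt c hc hca]
  have hbound := hP.sub_integral_le_cylinderError (σ := [0]) (b := max c 0)
    (g := fun x => (3 / 8 - max c 0) * (1 / 4 - 2 * max c 0) * max (x - 1 / 2) 0) (α := α)
    (by fun_prop) fun x hx => by
      have hmax8 : max c 0 ≤ 1 / 8 := max_le hc8.le (by norm_num)
      obtain ⟨d, hd, hdx⟩ := exists_sqDist_eq h.nonempty (Sw [0] x)
      have hx4 : Sw [0] x = x / 4 := rfl
      rw [hdx, hx4]
      rcases lt_or_ge d a with hda | had
      · rw [huniq d hd hda]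
        have hnonneg : 0 ≤ (3 / 8 - max c 0) * (1 / 4 - 2 * max c 0) * max (x - 1 / 2) 0 :=
          mul_nonneg (mul_nonneg (by linarith) (by linarith)) (le_max_right _ _)
        have hclamp : (x / 4 - max c 0) ^ 2 ≤ (x / 4 - c) ^ 2 := by
          rcases le_total c 0 with hc0 | hc0
          · rw [max_eq_right hc0]
            exact sq_sub_le_sq_sub_right hc0 (by linarith [hx.1])
          · rw [max_eq_left hc0]
        linarith
      · exact (sq_sub_sub_hinge_le (le_max_right c 0) hmax8 hx.2).trans
          (sq_sub_le_sq_sub_left (by linarith) (by linarith [hx.2]))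
  rw [integral_const_mul, hP.integral_max_sub_half] at hbound
  norm_num [Sw, sw, S1] at hbound
  linarith [sq_nonneg (max c 0 - 1 / 12)]

end CylinderBounds

end Straddles

namespace Straddles

section DistortionBounds

variable {P : Measure ℝ} [IsProbabilityMeasure P] {α : Finset ℝ} {a : ℝ} {k m : ℕ}

lemma le_cylinderError_zero_add_one_zero (h : Straddles α a) (hP : SelfSimilar P)
    (ha : a ≤ 3 / 8) :
    5 / 256 * V ≤ 1 / 4 * cylinderError P α [0] + 3 / 16 * cylinderError P α [1, 0] := by
  have h10 := h.le_cylinderError_one_zero hP ha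
  rcases le_total a (5 / 16) with ha' | ha'
  · nlinarith [cylinderError_nonneg P α [0]]
  · have h0 := hP.cylinderError_eq_add α [0]
    have h01 := hP.cylinderError_eq_add α [0, 1]
    simp only [List.cons_append, List.nil_append] at h0 h01
    linarith [h.le_cylinderError_zero_one_one hP ha', cylinderError_nonneg P α [0, 0],
      cylinderError_nonneg P α [0, 1, 0], sq_nonneg (a - 17 / 48)]

lemma lt_distortion_of_forall_le (h : Straddles α a) (hP : SelfSimilar P)
    (hmin : ∀ c ∈ α, a ≤ c) : 5 / 64 * V < distortion P α := by
  have h0 := h.le_cylinderError_zero_of_forall_le hP hmin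
  rw [hP.distortion_eq_add]
  rcases le_total a (3 / 8) with ha | ha
  · have h1 := hP.cylinderError_eq_add α [1]
    simp only [List.cons_append, List.nil_append] at h1
    linarith [h.le_cylinderError_one_zero hP ha, cylinderError_nonneg P α [1, 1],
      sq_nonneg (a - 23 / 84)]
  · nlinarith [cylinderError_nonneg P α [1]]

lemma lt_distortion_of_unique_left (h : Straddles α a) (hP : SelfSimilar P) (ha : 3 / 8 ≤ a)
    {c : ℝ} (hc : c ∈ α) (hca : c < a) (huniq : ∀ d ∈ α, d < a → d = c)
    (hcard : (α.filter (a ≤ ·)).card ≤ k) :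
    V / 64 + 3 / 16 * qError P k < distortion P α := by
  rw [hP.distortion_eq_add]
  linarith [h.lt_cylinderError_zero_of_unique_left hP ha hc hca huniq,
    h.qError_le_cylinderError_one hP hcard]

lemma le_distortion_of_le (h : Straddles α a) (hP : SelfSimilar P) (ha : a ≤ 3 / 8) (hk : 0 < k)
    (hcard : (α.filter (a < ·)).card ≤ k) :
    5 / 256 * V + 9 / 256 * qError P k ≤ distortion P α := by
  have h1 := hP.cylinderError_eq_add α [1]
  simp only [List.cons_append, List.nil_append] at h1
  rw [hP.distortion_eq_add]
  linarith [h.le_cylinderError_zero_add_one_zero hP ha,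
    h.qError_le_cylinderError_one_one hP ha hk hcard]

lemma le_distortion_of_ge (h : Straddles α a) (hP : SelfSimilar P) (ha : 3 / 8 ≤ a)
    (hcard : (α.filter (a ≤ ·)).card ≤ k) :
    63 / 4096 * V + 3 / 16 * qError P k ≤ distortion P α := by
  have h0 := hP.cylinderError_eq_add α [0]
  simp only [List.cons_append, List.nil_append] at h0
  rw [hP.distortion_eq_add]
  linarith [h.le_cylinderError_zero_one hP ha, cylinderError_nonneg P α [0, 0],
    h.qError_le_cylinderError_one hP hcard]

lemma lt_distortion (h : Straddles α a) (hP : SelfSimilar P) (hm : 0 < m)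
    (hcard : α.card ≤ m + 2) {r : ℝ} (hr : r ≤ 5 / 64 * V)
    (hr_le : r < 5 / 256 * V + 9 / 256 * qError P m)
    (hr_ge : r < 63 / 4096 * V + 3 / 16 * qError P m)
    (hr_unique : r ≤ V / 64 + 3 / 16 * qError P (m + 1)) : r < distortion P α := by
  have hsplit : (α.filter (· < a)).card + (α.filter (a ≤ ·)).card = α.card := by
    simpa only [not_lt] using Finset.card_filter_add_card_filter_not (s := α) (· < a)
  rcases (α.filter (· < a)).eq_empty_or_nonempty with hempty | ⟨c, hc⟩
  · refine hr.trans_lt (h.lt_distortion_of_forall_le hP fun c hc => ?_)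
    exact not_lt.mp (Finset.filter_eq_empty_iff.mp hempty hc)
  have hleft : 0 < (α.filter (· < a)).card := Finset.card_pos.mpr ⟨c, hc⟩
  obtain ⟨hcα, hca⟩ := Finset.mem_filter.mp hc
  rcases le_total a (3 / 8) with ha | ha
  · have hright : (α.filter (a < ·)).card < (α.filter (a ≤ ·)).card :=
      Finset.card_lt_card <| (Finset.ssubset_iff_of_subset <|
        Finset.monotone_filter_right α fun _ _ => le_of_lt).mpr ⟨a, by simp [h.mem], by simp⟩
    exact hr_le.trans_le (h.le_distortion_of_le hP ha hm (by omega))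
  by_cases hone : (α.filter (· < a)).card ≤ 1
  · refine hr_unique.trans_lt (h.lt_distortion_of_unique_left hP ha hcα hca ?_ (by omega))
    exact fun d hd hda => Finset.card_le_one.mp hone d (Finset.mem_filter.mpr ⟨hd, hda⟩) c hc
  · exact hr_ge.trans_le (h.le_distortion_of_ge hP ha (by omega))

end DistortionBounds

end Straddles

namespace Straddles

section TwoPoints

variable {P : Measure ℝ} [IsProbabilityMeasure P] {a c : ℝ}

lemma lt_distortion_insert_left (h : Straddles {a, c} a) (hP : SelfSimilar P) (hca : c < a) :
    13 / 64 * V < distortion P {a, c} := by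
  have hmem : ∀ d ∈ ({a, c} : Finset ℝ), d = a ∨ d = c := fun d hd => by simpa using hd
  rcases le_total a (3 / 8) with ha | ha
  · have hbound := hP.le_cylinderError_of_nearest (σ := [1]) (b := 3 / 8) h.nonempty
      fun y hy d hd => by
        norm_num [J_eq_Icc, Sw, S2] at hy
        have hd8 : d ≤ 3 / 8 := by rcases hmem d hd with rfl | rfl <;> linarith
        exact sq_sub_le_sq_sub_right hd8 (by linarith)
    norm_num [Sw, sw, S2] at hbound
    rw [hP.distortion_eq_add]
    linarith [cylinderError_nonneg P {a, c} [0]]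
  · have hcard : (({a, c} : Finset ℝ).filter (a ≤ ·)).card ≤ 1 := by
      simp [Finset.filter_insert, Finset.filter_singleton, hca.not_ge]
    have hbound := h.lt_distortion_of_unique_left hP ha (by simp) hca
      (fun d hd hda => (hmem d hd).resolve_left hda.ne) hcard
    rw [hP.qError_one] at hbound
    linarith

lemma lt_distortion_of_card_le_two {α : Finset ℝ} (h : Straddles α a) (hP : SelfSimilar P)
    (hcard : α.card ≤ 2) : 13 / 64 * V < distortion P α := by
  rcases le_or_gt α.card 1 with hone | htwo
  · obtain ⟨b, rfl⟩ := Finset.card_eq_one.mp (hone.antisymm h.nonempty.card_pos)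
    rw [hP.distortion_singleton]
    linarith [sq_nonneg (2 / 3 - b)]
  · obtain ⟨c, hc, hca⟩ := Finset.exists_mem_ne htwo a
    obtain rfl : {a, c} = α := Finset.eq_of_subset_of_card_le
      (Finset.insert_subset h.mem (Finset.singleton_subset_iff.mpr hc))
      (hcard.trans_eq (Finset.card_pair hca.symm).symm)
    rcases hca.lt_or_gt with hca | hac
    · exact h.lt_distortion_insert_left hP hca
    · exact hP.lt_distortion_pair hac (h.lt_add c hc hac)

end TwoPoints

end Straddles

/-- `u` and `v` are consecutive points of `α` and the boundary `(u + v) / 2` of their Voronoi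
regions lies in the gap `[1/4, 1/2]` between the two first-level cylinders, so that `α` is the
`join` of two smaller sets. -/
structure Splits (α : Finset ℝ) (u v : ℝ) : Prop where
  left_mem : u ∈ α
  right_mem : v ∈ α
  lt : u < v
  le_or_le : ∀ c ∈ α, c ≤ u ∨ v ≤ c
  half_le : 1 / 2 ≤ u + v
  le_one : u + v ≤ 1

section Splitting

variable {α : Finset ℝ} {u v : ℝ}

lemma exists_splits_left {a c : ℝ} (ha : a ∈ α)
    (hnear : ∀ d ∈ α, (3 / 8 - a) ^ 2 ≤ (3 / 8 - d) ^ 2) (hc : c ∈ α) (hca : c < a)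
    (hsum : 1 / 2 ≤ c + a) : ∃ u, Splits α u a := by
  have hc_mem : c ∈ α.filter (· < a) := Finset.mem_filter.mpr ⟨hc, hca⟩
  obtain ⟨u, hu, hmax⟩ := Finset.exists_max_image (α.filter (· < a)) id ⟨c, hc_mem⟩
  obtain ⟨huα, hua⟩ := Finset.mem_filter.mp hu
  have hcu : c ≤ u := hmax c hc_mem
  refine ⟨u, huα, ha, hua, fun d hd => ?_, by linarith, ?_⟩
  · exact (lt_or_ge d a).imp_left fun hda => hmax d (Finset.mem_filter.mpr ⟨hd, hda⟩)
  · by_contra! hgt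
    nlinarith [hnear u huα]

lemma exists_splits_right {a c : ℝ} (ha : a ∈ α)
    (hnear : ∀ d ∈ α, (3 / 8 - a) ^ 2 ≤ (3 / 8 - d) ^ 2) (hc : c ∈ α) (hac : a < c)
    (hsum : a + c ≤ 1) : ∃ v, Splits α a v := by
  have hc_mem : c ∈ α.filter (a < ·) := Finset.mem_filter.mpr ⟨hc, hac⟩
  obtain ⟨v, hv, hmin⟩ := Finset.exists_min_image (α.filter (a < ·)) id ⟨c, hc_mem⟩
  obtain ⟨hvα, hav⟩ := Finset.mem_filter.mp hv
  have hvc : v ≤ c := hmin c hc_mem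
  refine ⟨v, ha, hvα, hav, fun d hd => ?_, ?_, by linarith⟩
  · exact (le_or_gt d a).imp_right fun had => hmin d (Finset.mem_filter.mpr ⟨hd, had⟩)
  · by_contra! hlt
    nlinarith [hnear v hvα]

-- The point nearest to the midpoint `3 / 8` of the gap decides.
lemma exists_straddles_or_splits (hα : α.Nonempty) :
    (∃ a, Straddles α a) ∨ ∃ u v, Splits α u v := by
  obtain ⟨a, ha, hnear⟩ := Finset.exists_min_image α (fun c => (3 / 8 - c) ^ 2) hα
  by_cases hleft : ∃ c ∈ α, c < a ∧ 1 / 2 ≤ c + a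
  · obtain ⟨c, hc, hca, hsum⟩ := hleft
    obtain ⟨u, hu⟩ := exists_splits_left ha hnear hc hca hsum
    exact Or.inr ⟨u, a, hu⟩
  by_cases hright : ∃ c ∈ α, a < c ∧ a + c ≤ 1
  · obtain ⟨c, hc, hac, hsum⟩ := hright
    exact Or.inr ⟨a, exists_splits_right ha hnear hc hac hsum⟩
  push Not at hleft hright
  exact Or.inl ⟨a, ha, hleft, hright⟩

namespace Splits

variable {P : Measure ℝ} [IsFiniteMeasure P]

lemma cylinderError_zero (h : Splits α u v) (hP : SelfSimilar P) :
    cylinderError P α [0] = cylinderError P (α.filter (· ≤ u)) [0] := by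
  have hu : u ∈ α.filter (· ≤ u) := Finset.mem_filter.mpr ⟨h.left_mem, le_rfl⟩
  refine (hP.cylinderError_anti ⟨u, hu⟩ (Finset.filter_subset _ _) [0]).antisymm <|
    hP.cylinderError_le_cylinderError ⟨u, h.left_mem⟩ fun y hy c hc => ?_
  norm_num [J_eq_Icc, Sw, S1] at hy
  rcases h.le_or_le c hc with hcu | hvc
  · exact ⟨c, Finset.mem_filter.mpr ⟨hc, hcu⟩, le_rfl⟩
  · exact ⟨u, hu, sq_sub_le_sq_sub_left (h.lt.le.trans hvc) (by linarith [h.half_le])⟩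

lemma cylinderError_one (h : Splits α u v) (hP : SelfSimilar P) :
    cylinderError P α [1] = cylinderError P (α.filter (v ≤ ·)) [1] := by
  have hv : v ∈ α.filter (v ≤ ·) := Finset.mem_filter.mpr ⟨h.right_mem, le_rfl⟩
  refine (hP.cylinderError_anti ⟨v, hv⟩ (Finset.filter_subset _ _) [1]).antisymm <|
    hP.cylinderError_le_cylinderError ⟨v, h.right_mem⟩ fun y hy c hc => ?_
  norm_num [J_eq_Icc, Sw, S2] at hy
  rcases h.le_or_le c hc with hcu | hvc
  · exact ⟨v, hv, sq_sub_le_sq_sub_right (hcu.trans h.lt.le) (by linarith [h.le_one])⟩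
  · exact ⟨c, Finset.mem_filter.mpr ⟨hc, hvc⟩, le_rfl⟩

lemma exists_eq_join (h : Splits α u v) (hP : SelfSimilar P) :
    ∃ β γ : Finset ℝ, β.Nonempty ∧ γ.Nonempty ∧ α = join β γ ∧ β.card + γ.card = α.card ∧
      distortion P α = 1 / 64 * distortion P β + 3 / 16 * distortion P γ := by
  obtain ⟨β, hβcard, hβ⟩ := exists_image_Sw_eq [0] (α.filter (· ≤ u))
  obtain ⟨γ, hγcard, hγ⟩ := exists_image_Sw_eq [1] (α.filter (v ≤ ·))
  change β.image S1 = _ at hβ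
  change γ.image S2 = _ at hγ
  have hright : α.filter (v ≤ ·) = α.filter (¬ · ≤ u) := Finset.filter_congr fun c hc =>
    ⟨fun hvc => not_le.mpr (h.lt.trans_le hvc), (h.le_or_le c hc).resolve_left⟩
  have hβ_ne : (β.image S1).Nonempty := ⟨u, by simp [hβ, h.left_mem]⟩
  have hγ_ne : (γ.image S2).Nonempty := ⟨v, by simp [hγ, h.right_mem]⟩
  refine ⟨β, γ, Finset.image_nonempty.mp hβ_ne, Finset.image_nonempty.mp hγ_ne, ?_, ?_, ?_⟩
  · rw [join, hβ, hγ, hright, Finset.filter_union_filter_not_eq]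
  · rw [hβcard, hγcard, hright, Finset.card_filter_add_card_filter_not]
  · rw [hP.distortion_eq_add, h.cylinderError_zero hP, h.cylinderError_one hP, ← hβ, ← hγ,
      cylinderError_image_S1, cylinderError_image_S2]
    ring

end Splits

end Splitting

section SmallQuantizationErrors

variable {P : Measure ℝ} [IsProbabilityMeasure P] {α : Finset ℝ} {n : ℕ}

namespace SelfSimilar

lemma exists_straddles_or_eq_join (hP : SelfSimilar P) (hα : α.Nonempty) :
    (∃ a, Straddles α a) ∨
      ∃ β γ : Finset ℝ, β.Nonempty ∧ γ.Nonempty ∧ α = join β γ ∧ β.card + γ.card = α.card ∧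
        distortion P α = 1 / 64 * distortion P β + 3 / 16 * distortion P γ :=
  (exists_straddles_or_splits hα).imp_right fun ⟨_, _, h⟩ => h.exists_eq_join hP

lemma le_qError_of_straddles (hP : SelfSimilar P) (hn : 0 < n) {r : ℝ}
    (hstraddle : ∀ α a, Straddles α a → α.card ≤ n → r ≤ distortion P α)
    (hsplit : ∀ i j, 0 < i → 0 < j → i + j ≤ n → r ≤ 1 / 64 * qError P i + 3 / 16 * qError P j) :
    r ≤ qError P n := by
  refine le_qError hn fun α hα hcard => ?_
  obtain ⟨a, h⟩ | ⟨β, γ, hβ, hγ, -, hβγ, hD⟩ := hP.exists_straddles_or_eq_join hα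
  · exact hstraddle α a h hcard
  · have hr := hsplit β.card γ.card hβ.card_pos hγ.card_pos (hβγ.trans_le hcard)
    linarith [qError_le_distortion P hβ le_rfl, qError_le_distortion P hγ le_rfl]

lemma qError_two (hP : SelfSimilar P) : qError P 2 = 13 / 64 * V := by
  have hone := hP.qError_one
  refine le_antisymm ?_ (hP.le_qError_of_straddles two_pos
    (fun α a h hcard => (h.lt_distortion_of_card_le_two hP hcard).le) fun i j hi hj hij => ?_)
  · linarith [hP.qError_add_le one_pos one_pos]
  · obtain ⟨rfl, rfl⟩ : i = 1 ∧ j = 1 := by omega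
    linarith

lemma qError_three (hP : SelfSimilar P) : qError P 3 = 55 / 1024 * V := by
  have hone := hP.qError_one
  have htwo := hP.qError_two
  refine le_antisymm ?_ (hP.le_qError_of_straddles three_pos (fun α a h hcard => ?_)
    fun i j hi hj hij => ?_)
  · linarith [hP.qError_add_le one_pos two_pos]
  · exact (h.lt_distortion hP one_pos hcard (by norm_num) (by linarith) (by linarith)
      (by linarith)).le
  · obtain ⟨rfl, rfl⟩ | ⟨rfl, rfl⟩ | ⟨rfl, rfl⟩ :
      i = 1 ∧ j = 1 ∨ i = 1 ∧ j = 2 ∨ i = 2 ∧ j = 1 := by omega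
    all_goals linarith

lemma qError_four_le (hP : SelfSimilar P) : qError P 4 ≤ 421 / 16384 * V := by
  linarith [hP.qError_add_le one_pos three_pos, hP.qError_one, hP.qError_three]

lemma qError_five_le (hP : SelfSimilar P) : qError P 5 ≤ 217 / 16384 * V := by
  linarith [hP.qError_add_le two_pos three_pos, hP.qError_two, hP.qError_three]

end SelfSimilar

lemma Straddles.qError_lt_distortion {a : ℝ} (h : Straddles α a) (hP : SelfSimilar P)
    (hn : 2 ≤ n) (hcard : α.card ≤ n) : qError P n < distortion P α := by
  have hone := hP.qError_one
  have htwo := hP.qError_two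
  have hthree := hP.qError_three
  obtain rfl | rfl | rfl | hn5 : n = 2 ∨ n = 3 ∨ n = 4 ∨ 5 ≤ n := by omega
  · exact htwo ▸ h.lt_distortion_of_card_le_two hP hcard
  · exact h.lt_distortion hP one_pos hcard (by linarith) (by linarith) (by linarith) (by linarith)
  · have hfour := hP.qError_four_le
    exact h.lt_distortion hP two_pos hcard (by linarith) (by linarith) (by linarith) (by linarith)
  · obtain ⟨m, rfl⟩ : ∃ m, n = m + 2 := ⟨n - 2, by omega⟩
    have hle := (qError_anti P (by norm_num) hn5).trans hP.qError_five_le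
    have hm := qError_nonneg P m
    have hm' := qError_nonneg P (m + 1)
    exact h.lt_distortion hP (by omega) hcard (by linarith) (by linarith) (by linarith)
      (by linarith)

end SmallQuantizationErrors

/-- The point `S_σ(2/3)` representing the cylinder `J σ`: since `2/3` is the mean of `P`, it is the
conditional mean of `P` on `J σ`. -/
def centre (σ : List (Fin 2)) : ℝ := Sw σ (2 / 3)

section Centres

lemma centre_cons_zero (σ : List (Fin 2)) : centre (0 :: σ) = S1 (centre σ) := rfl

lemma centre_cons_one (σ : List (Fin 2)) : centre (1 :: σ) = S2 (centre σ) := rfl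

lemma centre_mem_Icc (σ : List (Fin 2)) : centre σ ∈ Icc (0 : ℝ) 1 :=
  mapsTo_Sw σ ⟨by norm_num, by norm_num⟩

lemma centre_ne_third (σ : List (Fin 2)) : centre σ ≠ 1 / 3 := by
  rcases σ with _ | ⟨i, σ⟩
  · norm_num [centre, Sw]
  · have hmem := centre_mem_Icc σ
    obtain rfl | rfl : i = 0 ∨ i = 1 := by omega
    · rw [centre_cons_zero, S1]
      linarith [hmem.2]
    · rw [centre_cons_one, S2]
      linarith [hmem.1]

lemma centre_cons_ne_centre_nil (i : Fin 2) (σ : List (Fin 2)) : centre (i :: σ) ≠ centre [] := by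
  have hnil : centre [] = 2 / 3 := rfl
  rw [hnil]
  obtain rfl | rfl : i = 0 ∨ i = 1 := by omega
  · rw [centre_cons_zero, S1]
    linarith [(centre_mem_Icc σ).2]
  · rw [centre_cons_one, S2]
    exact fun h => centre_ne_third σ (by linarith)

lemma centre_injective : Function.Injective centre := by
  intro σ
  induction σ with
  | nil =>
    rintro (_ | ⟨j, τ⟩) h
    · rfl
    · exact absurd h.symm (centre_cons_ne_centre_nil j τ)
  | cons i σ ih =>
    rintro (_ | ⟨j, τ⟩) h
    · exact absurd h (centre_cons_ne_centre_nil i σ)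
    · have hσ := centre_mem_Icc σ
      have hτ := centre_mem_Icc τ
      obtain rfl | rfl : i = 0 ∨ i = 1 := by omega
      all_goals obtain rfl | rfl : j = 0 ∨ j = 1 := by omega
      all_goals simp only [centre_cons_zero, centre_cons_one, S1, S2] at h
      · rw [ih (a₂ := τ) (by linarith)]
      · linarith [hσ.2, hτ.1]
      · linarith [hσ.1, hτ.2]
      · rw [ih (a₂ := τ) (by linarith)]

lemma join_image_centre (A B : Finset (List (Fin 2))) :
    join (A.image centre) (B.image centre) =
      (A.image (List.cons 0) ∪ B.image (List.cons 1)).image centre := by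
  simp only [join, Finset.image_union, Finset.image_image]
  rfl

lemma sum_image_cons_union (A B : Finset (List (Fin 2))) :
    ∑ σ ∈ A.image (List.cons 0) ∪ B.image (List.cons 1), pw σ * sw σ ^ 2 =
      1 / 64 * ∑ σ ∈ A, pw σ * sw σ ^ 2 + 3 / 16 * ∑ σ ∈ B, pw σ * sw σ ^ 2 := by
  have hdisj : Disjoint (A.image (List.cons 0)) (B.image (List.cons 1)) := by
    simp [Finset.disjoint_left]
  rw [Finset.sum_union hdisj, Finset.sum_image List.cons_injective.injOn,
    Finset.sum_image List.cons_injective.injOn, Finset.mul_sum, Finset.mul_sum]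
  congr 1 <;> refine Finset.sum_congr rfl fun σ _ => ?_ <;>
    simp only [pw, sw, if_true, one_ne_zero, if_false] <;> ring

end Centres

namespace IsOptimal

section Structure

variable {P : Measure ℝ} {α β γ : Finset ℝ} {n : ℕ}

lemma left_of_join [IsFiniteMeasure P] (h : IsOptimal P n (join β γ)) (hP : SelfSimilar P)
    (hβ : β.Nonempty) (hγ : γ.Nonempty) (hcard : β.card + γ.card ≤ n)
    (hD : distortion P (join β γ) = 1 / 64 * distortion P β + 3 / 16 * distortion P γ) :
    IsOptimal P β.card β :=
  isOptimal_of_forall_distortion_le hβ le_rfl fun β' hβ' hle => by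
    have hcard' : (join β' γ).card ≤ n := (card_join_le β' γ).trans (by omega)
    linarith [h.distortion_le (nonempty_join_left hβ' γ) hcard', hP.distortion_join_le hβ' hγ]

lemma right_of_join [IsFiniteMeasure P] (h : IsOptimal P n (join β γ)) (hP : SelfSimilar P)
    (hβ : β.Nonempty) (hγ : γ.Nonempty) (hcard : β.card + γ.card ≤ n)
    (hD : distortion P (join β γ) = 1 / 64 * distortion P β + 3 / 16 * distortion P γ) :
    IsOptimal P γ.card γ :=
  isOptimal_of_forall_distortion_le hγ le_rfl fun γ' hγ' hle => by
    have hcard' : (join β γ').card ≤ n := (card_join_le β γ').trans (by omega)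
    linarith [h.distortion_le (nonempty_join_left hβ γ') hcard', hP.distortion_join_le hβ hγ']

variable [IsProbabilityMeasure P]

lemma eq_singleton_of_le_one (h : IsOptimal P n α) (hP : SelfSimilar P) (hn : n ≤ 1) :
    α = {2 / 3} := by
  obtain ⟨b, rfl⟩ := Finset.card_eq_one.mp ((h.2.1.trans hn).antisymm h.1.card_pos)
  have hle := h.distortion_le (Finset.singleton_nonempty (2 / 3)) h.2.1
  rw [hP.distortion_singleton, hP.distortion_singleton] at hle
  have hsq : (2 / 3 - b) ^ 2 = 0 := le_antisymm (by linarith) (sq_nonneg _)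
  rw [sub_eq_zero.mp (pow_eq_zero_iff two_ne_zero |>.mp hsq)]

lemma exists_eq_image_centre (h : IsOptimal P n α) (hP : SelfSimilar P) :
    ∃ O : Finset (List (Fin 2)), α = O.image centre ∧
      distortion P α = (∑ σ ∈ O, pw σ * sw σ ^ 2) * V := by
  induction n using Nat.strong_induction_on generalizing α with
  | _ n ih =>
    rcases le_or_gt n 1 with hn | hn
    · rw [h.eq_singleton_of_le_one hP hn]
      refine ⟨{[]}, rfl, ?_⟩
      rw [hP.distortion_singleton, Finset.sum_singleton, pw, sw]
      norm_num
    obtain ⟨a, ha⟩ | ⟨β, γ, hβ, hγ, rfl, hβγ, hD⟩ := hP.exists_straddles_or_eq_join h.1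
    · exact absurd h.2.2 (ha.qError_lt_distortion hP hn h.2.1).ne'
    have hcard : β.card + γ.card ≤ n := hβγ.trans_le h.2.1
    obtain ⟨A, rfl, hA⟩ := ih _ (by have := hγ.card_pos; omega) (h.left_of_join hP hβ hγ hcard hD)
    obtain ⟨B, rfl, hB⟩ := ih _ (by have := hβ.card_pos; omega) (h.right_of_join hP hβ hγ hcard hD)
    refine ⟨_, join_image_centre A B, ?_⟩
    rw [hD, hA, hB, sum_image_cons_union]
    ring

end Structure

end IsOptimal

theorem stmt_18 (P : Measure ℝ) [IsProbabilityMeasure P] (hP : SelfSimilar P)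
    (n : ℕ) (hn : 2 ≤ n) (α : Finset ℝ) (hα : IsOptimal P n α)
    (O : Finset (List (Fin 2))) (hO : ∀ σ : List (Fin 2), σ ∈ O ↔ Sw σ (2 / 3) ∈ α) :
    qError P n = (∑ σ ∈ O, qnt P σ) * (16 / 153) ∧
    qError P n =
      (∑ σ ∈ O, (3 : ℝ) ^ (σ.length - cnt σ) / 2 ^ (4 * σ.length + 2 * cnt σ)) *
        (16 / 153) := by
  obtain ⟨A, rfl, hA⟩ := hα.exists_eq_image_centre hP
  obtain rfl : O = A := by
    ext σ
    exact (hO σ).trans centre_injective.mem_finset_image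
  rw [← hα.2.2, hA]
  constructor
  · simp only [hP.qnt_eq]
  · simp only [pw_mul_sw_sq]
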